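/- For integers n and t with n ≥ 2t + 2 and t ≥ 1, D_R(G4) − D_R(G⁰(n,t)) = (8/3)n + (4/3)t − 12, where G4 is the cactus on n vertices obtained from G⁰(n,t) by moving one pendent edge from the common vertex v1 to a vertex v2 ≠ v1 of one of the triangles (so G4 consists of t triangles and n − 2t − 2 pendent edges at v1, together with one pendent edge attached at a non-central vertex v2 of a triangle). -/

import Mathlib

open Finset

/-- Effective resistance between two vertices of a graph (for a connected graph
this is the effective resistance when every edge is a unit resistor), defined via
the matrix-tree / spanning-two-forest determinant formula. -/
noncomputable def effRes {V : Type*} [Finite V] (G : SimpleGraph V) (u v : V) : ℝ :=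
  letI := Fintype.ofFinite V
  letI := Classical.decEq V
  letI : DecidableRel G.Adj := Classical.decRel _
  if u = v then 0
  else
    Matrix.det ((G.lapMatrix ℝ).submatrix
        (fun w : {w : V // w ≠ u ∧ w ≠ v} => (w : V)) (fun w => (w : V)))
      / Matrix.det ((G.lapMatrix ℝ).submatrix
        (fun w : {w : V // w ≠ u} => (w : V)) (fun w => (w : V)))

/-- The degree resistance distance `D_R(G) = Σ_{ {u,v} ⊆ V } (d(u)+d(v)) R(u,v)`. -/
noncomputable def degRes {V : Type*} [Finite V] (G : SimpleGraph V) : ℝ :=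
  letI := Fintype.ofFinite V
  letI := Classical.decEq V
  letI : DecidableRel G.Adj := Classical.decRel _
  (1 / 2) * ∑ u : V, ∑ v : V, ((G.degree u : ℝ) + (G.degree v : ℝ)) * effRes G u v

/-- The Kirchhoff index `Kf(G) = Σ_{ {u,v} ⊆ V } R(u,v)`. -/
noncomputable def kirchhoffIndex {V : Type*} [Finite V] (G : SimpleGraph V) : ℝ :=
  letI := Fintype.ofFinite V
  (1 / 2) * ∑ u : V, ∑ v : V, effRes G u v

/-- `Kf_v(G) = Σ_{u ∈ V} R(u,v)`. -/
noncomputable def Kfv {V : Type*} [Finite V] (G : SimpleGraph V) (v : V) : ℝ :=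
  letI := Fintype.ofFinite V
  ∑ u : V, effRes G u v

/-- `D_v(G) = Σ_{u ∈ V} d(u) R(u,v)`. -/
noncomputable def Dv {V : Type*} [Finite V] (G : SimpleGraph V) (v : V) : ℝ :=
  letI := Fintype.ofFinite V
  letI := Classical.decEq V
  letI : DecidableRel G.Adj := Classical.decRel _
  ∑ u : V, (G.degree u : ℝ) * effRes G u v

/-- A subgraph is a cycle if it is connected and `2`-regular. -/
def IsCycleSubgraph {V : Type*} {G : SimpleGraph V} (H : G.Subgraph) : Prop :=
  H.coe.Connected ∧ ∀ v ∈ H.verts, {u | H.Adj v u}.ncard = 2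

/-- A cactus is a connected graph in which any two distinct cycles share at most
one vertex (equivalently, every block is an edge or a cycle). -/
def IsCactus {V : Type*} (G : SimpleGraph V) : Prop :=
  G.Connected ∧ ∀ H₁ H₂ : G.Subgraph, IsCycleSubgraph H₁ → IsCycleSubgraph H₂ →
    H₁ ≠ H₂ → (H₁.verts ∩ H₂.verts).ncard ≤ 1

/-- The number of cycles of a graph. -/
noncomputable def numCycles {V : Type*} (G : SimpleGraph V) : ℕ :=
  {H : G.Subgraph | IsCycleSubgraph H}.ncard

/-- `G ∈ Cact(n;t)`: `G` is a cactus with `n` vertices and `t` cycles. -/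
def MemCact {V : Type*} (n t : ℕ) (G : SimpleGraph V) : Prop :=
  IsCactus G ∧ Nat.card V = n ∧ numCycles G = t

/-- `G⁰(n,t)`: `t` triangles (on vertices `2i+1, 2i+2`, `i < t`) and `n - 2t - 1`
pendent edges, all sharing the common vertex `0`. -/
def G0 (n t : ℕ) : SimpleGraph (Fin n) :=
  SimpleGraph.fromRel (fun a b =>
    a.val = 0 ∨ (Odd a.val ∧ b.val = a.val + 1 ∧ b.val ≤ 2 * t))

/-- `G3`: `t` triangles, `n - 2t - 3` pendent edges, and one pendent path of
length 2 (through `2t+1` to `2t+2`), all attached at the common vertex `0`. -/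
def G3g (n t : ℕ) : SimpleGraph (Fin n) :=
  SimpleGraph.fromRel (fun a b =>
    (a.val = 0 ∧ b.val ≠ 2 * t + 2) ∨
    (Odd a.val ∧ b.val = a.val + 1 ∧ b.val ≤ 2 * t) ∨
    (a.val = 2 * t + 1 ∧ b.val = 2 * t + 2))

/-- `G4`: `t` triangles and `n - 2t - 2` pendent edges at the common vertex `0`,
together with one pendent edge (to `2t+1`) attached at the triangle vertex `1`. -/
def G4g (n t : ℕ) : SimpleGraph (Fin n) :=
  SimpleGraph.fromRel (fun a b =>
    (a.val = 0 ∧ b.val ≠ 2 * t + 1) ∨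
    (Odd a.val ∧ b.val = a.val + 1 ∧ b.val ≤ 2 * t) ∨
    (a.val = 1 ∧ b.val = 2 * t + 1))

/-- `G5`: `t - 1` triangles, one quadrilateral `C₄` (on `0, 2t-1, 2t, 2t+1`), and
`n - 2t - 2` pendent edges, all sharing the common vertex `0`. -/
def G5g (n t : ℕ) : SimpleGraph (Fin n) :=
  SimpleGraph.fromRel (fun a b =>
    (a.val = 0 ∧ b.val ≠ 2 * t) ∨
    (Odd a.val ∧ b.val = a.val + 1 ∧ b.val ≤ 2 * t - 2) ∨
    (a.val = 2 * t - 1 ∧ b.val = 2 * t) ∨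
    (a.val = 2 * t ∧ b.val = 2 * t + 1))

/-- `G6`: `t - 1` triangles, one quadrilateral `C₄` (on `0, 2t-1, 2t, 2t+1`), and
`n - 2t - 3` pendent edges at the common vertex `0`, together with one pendent edge
(to `2t+2`) attached at the quadrilateral vertex `2t-1`, which is adjacent to `0`. -/
def G6g (n t : ℕ) : SimpleGraph (Fin n) :=
  SimpleGraph.fromRel (fun a b =>
    (a.val = 0 ∧ b.val ≠ 2 * t ∧ b.val ≠ 2 * t + 2) ∨
    (Odd a.val ∧ b.val = a.val + 1 ∧ b.val ≤ 2 * t - 2) ∨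
    (a.val = 2 * t - 1 ∧ (b.val = 2 * t ∨ b.val = 2 * t + 2)) ∨
    (a.val = 2 * t ∧ b.val = 2 * t + 1))

/-- `G7`: `t - 1` triangles, one quadrilateral `C₄` (on `0, 2t-1, 2t, 2t+1`), and
`n - 2t - 3` pendent edges at the common vertex `0`, together with one pendent edge
(to `2t+2`) attached at the quadrilateral vertex `2t`, which is opposite to `0`. -/
def G7g (n t : ℕ) : SimpleGraph (Fin n) :=
  SimpleGraph.fromRel (fun a b =>
    (a.val = 0 ∧ b.val ≠ 2 * t ∧ b.val ≠ 2 * t + 2) ∨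
    (Odd a.val ∧ b.val = a.val + 1 ∧ b.val ≤ 2 * t - 2) ∨
    (a.val = 2 * t - 1 ∧ b.val = 2 * t) ∨
    (a.val = 2 * t ∧ (b.val = 2 * t + 1 ∨ b.val = 2 * t + 2)))

/-- `G8`: `t - 2` triangles, two quadrilaterals `C₄` (on `0, 2t-3, 2t-2, 2t-1` and
on `0, 2t, 2t+1, 2t+2`), and `n - 2t - 3` pendent edges, all sharing the common
vertex `0`. -/
def G8g (n t : ℕ) : SimpleGraph (Fin n) :=
  SimpleGraph.fromRel (fun a b =>
    (a.val = 0 ∧ b.val ≠ 2 * t - 2 ∧ b.val ≠ 2 * t + 1) ∨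
    (Odd a.val ∧ b.val = a.val + 1 ∧ b.val ≤ 2 * t - 4) ∨
    (a.val = 2 * t - 3 ∧ b.val = 2 * t - 2) ∨
    (a.val = 2 * t - 2 ∧ b.val = 2 * t - 1) ∨
    (a.val = 2 * t ∧ b.val = 2 * t + 1) ∨
    (a.val = 2 * t + 1 ∧ b.val = 2 * t + 2))

/-- `G9`: `t - 1` triangles, one quadrilateral `C₄` (on `0, 2t-1, 2t, 2t+1`), and
`n - 2t - 3` pendent edges at the common vertex `0`, together with one pendent edge
(to `2t+2`) attached at the non-central triangle vertex `1`. -/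
def G9g (n t : ℕ) : SimpleGraph (Fin n) :=
  SimpleGraph.fromRel (fun a b =>
    (a.val = 0 ∧ b.val ≠ 2 * t ∧ b.val ≠ 2 * t + 2) ∨
    (Odd a.val ∧ b.val = a.val + 1 ∧ b.val ≤ 2 * t - 2) ∨
    (a.val = 2 * t - 1 ∧ b.val = 2 * t) ∨
    (a.val = 2 * t ∧ b.val = 2 * t + 1) ∨
    (a.val = 1 ∧ b.val = 2 * t + 2))

/-- `G10`: `t - 1` triangles, one pentagon `C₅` (on `0, 2t-1, 2t, 2t+1, 2t+2`), and
`n - 2t - 3` pendent edges, all sharing the common vertex `0`. -/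
def G10g (n t : ℕ) : SimpleGraph (Fin n) :=
  SimpleGraph.fromRel (fun a b =>
    (a.val = 0 ∧ b.val ≠ 2 * t ∧ b.val ≠ 2 * t + 1) ∨
    (Odd a.val ∧ b.val = a.val + 1 ∧ b.val ≤ 2 * t - 2) ∨
    (a.val = 2 * t - 1 ∧ b.val = 2 * t) ∨
    (a.val = 2 * t ∧ b.val = 2 * t + 1) ∨
    (a.val = 2 * t + 1 ∧ b.val = 2 * t + 2))

/-!
By Cramer's rule the determinant quotient defining `R(u, v)` is the potential difference
`x v - x u` of any solution of Kirchhoff's equations `L x = δ_v - δ_u`, so a resistance is found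
by exhibiting a potential. Attaching a pendent vertex `w` to a vertex `v` of a connected graph
leaves the old resistances unchanged and gives `R(w, x) = R(v, x) + 1`; hence it increases `D_R`
by `2 Kf_v + D_v` plus a term independent of `v`.

Let `a`, `b` be the non-apical vertices of a triangle attached to the rest of the graph only at its
apex `c`. Moving the sink of a unit current from `c` to `a` adds `2/3 δ_a + 1/3 δ_b` to the
potential, so `R(x, a) - R(x, c)` is `2/3` for `x ∉ {a, b}`, `-2/3` for `x = a` and `0` for
`x = b`. Therefore moving a pendent vertex from `c` to `a` changes `D_R` by
`4/3 (|V| + |E|) - 8`, where `V` and `E` belong to the graph without the pendent vertex. Here that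
graph is `G⁰(n - 1, t)`, with `n - 1` vertices and `n - 2 + t` edges.
-/

open scoped Matrix

theorem exists_eq_zero_and_comp_val_eq {α M : Type*} [Zero M] {a : α} (y : {b // b ≠ a} → M) :
    ∃ x : α → M, x a = 0 ∧ x ∘ Subtype.val = y :=
  ⟨Function.extend Subtype.val y 0, Function.extend_apply' _ _ _ (by simp),
    Function.extend_comp Subtype.val_injective y 0⟩

section Matrix

variable {m R : Type*} [Fintype m]

theorem submatrix_val_mulVec_comp_val [NonUnitalNonAssocSemiring R] (A : Matrix m m R)
    {p : m → Prop} [DecidablePred p] {x : m → R} (hx : ∀ i, ¬ p i → x i = 0) :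
    A.submatrix ((↑) : Subtype p → m) ((↑) : Subtype p → m) *ᵥ (x ∘ (↑)) =
      (A *ᵥ x) ∘ ((↑) : Subtype p → m) := by
  ext i
  have hzero : ∑ j : {j // ¬ p j}, A i j * x j = 0 :=
    Finset.sum_eq_zero fun j _ => by rw [hx j j.2, mul_zero]
  simp only [Matrix.mulVec, dotProduct, Matrix.submatrix_apply, Function.comp_apply]
  rw [← Fintype.sum_subtype_add_sum_subtype p, hzero, add_zero]

variable [DecidableEq m] [CommRing R]

theorem adjugate_apply_self_eq_det_submatrix (A : Matrix m m R) (i : m) :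
    A.adjugate i i = (A.submatrix ((↑) : {j // j ≠ i} → m) (↑)).det := by
  rw [Matrix.adjugate_apply, Matrix.twoBlockTriangular_det' _ (· = i)]
  · have hcorner : ((A.updateRow i (Pi.single i 1)).toSquareBlockProp (· = i)).det = 1 := by
      rw [Matrix.det_unique]
      simp [Matrix.toSquareBlockProp, (default : {j // j = i}).2]
    have hrest : (A.updateRow i (Pi.single i 1)).toSquareBlockProp (fun j => ¬ j = i) =
        A.submatrix ((↑) : {j // j ≠ i} → m) (↑) := by
      ext j k
      simp [Matrix.toSquareBlockProp, Matrix.updateRow_apply, j.2]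
    rw [hrest]
    convert one_mul _
    convert hcorner
  · rintro _ rfl k hk
    simp [hk]

theorem det_mul_apply_of_mulVec_eq_single {A : Matrix m m R} {x : m → R} {i : m}
    (h : A *ᵥ x = Pi.single i 1) :
    A.det * x i = (A.submatrix ((↑) : {j // j ≠ i} → m) (↑)).det := by
  calc A.det * x i = (A.adjugate *ᵥ (A *ᵥ x)) i := by
        rw [Matrix.mulVec_mulVec, Matrix.adjugate_mul, Matrix.smul_mulVec, Matrix.one_mulVec,
          Pi.smul_apply, smul_eq_mul]
    _ = (A.submatrix ((↑) : {j // j ≠ i} → m) (↑)).det := by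
        rw [h, Matrix.mulVec_single_one, ← adjugate_apply_self_eq_det_submatrix, Matrix.col_apply]

end Matrix

section Potential

variable {V : Type*} [Fintype V] [DecidableEq V] (G : SimpleGraph V) [DecidableRel G.Adj]

/-- The Laplacian of `G` with the row and column of the vertex `u` deleted: the matrix of
Kirchhoff's equations once `u` is held at potential `0`. -/
def groundedLap (u : V) : Matrix {w // w ≠ u} {w // w ≠ u} ℝ :=
  (G.lapMatrix ℝ).submatrix (↑) (↑)

/-- `x` is an electric potential on `G`, with unit resistors as edges, for the unit current
that enters at `v` and leaves at `u`. -/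
def IsUnitPotential (u v : V) (x : V → ℝ) : Prop :=
  G.lapMatrix ℝ *ᵥ x = Pi.single v 1 - Pi.single u 1

variable {G}

theorem lapMatrix_mulVec_apply_eq_sum_sub (x : V → ℝ) (w : V) :
    (G.lapMatrix ℝ *ᵥ x) w = ∑ y, if G.Adj w y then x w - x y else 0 := by
  rw [SimpleGraph.lapMatrix_mulVec_apply, ← SimpleGraph.card_neighborFinset_eq_degree,
    ← nsmul_eq_mul, ← Finset.sum_const, ← Finset.sum_sub_distrib,
    SimpleGraph.neighborFinset_eq_filter, Finset.sum_filter]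

theorem sum_lapMatrix_mulVec_apply (x : V → ℝ) : ∑ w, (G.lapMatrix ℝ *ᵥ x) w = 0 := by
  have h : (fun _ : V => (1 : ℝ)) ⬝ᵥ (G.lapMatrix ℝ *ᵥ x) = 0 := by
    rw [Matrix.dotProduct_mulVec, ← Matrix.mulVec_transpose,
      (SimpleGraph.isSymm_lapMatrix ℝ G).eq, SimpleGraph.lapMatrix_mulVec_const_eq_zero,
      zero_dotProduct]
  simpa only [dotProduct, one_mul] using h

theorem groundedLap_mulVec_eq_comp_val_iff {u : V} {x b : V → ℝ} (hx : x u = 0)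
    (hb : ∑ w, b w = 0) :
    groundedLap G u *ᵥ (x ∘ Subtype.val) = b ∘ Subtype.val ↔ G.lapMatrix ℝ *ᵥ x = b := by
  rw [groundedLap, submatrix_val_mulVec_comp_val _ (by simpa using hx)]
  refine ⟨fun h => ?_, fun h => by rw [h]⟩
  have hne : ∀ w, w ≠ u → (G.lapMatrix ℝ *ᵥ x) w = b w := fun w hw => congrFun h ⟨w, hw⟩
  -- The entries of both sides sum to `0`, so the equation at `u` follows from the others.
  have hu : (G.lapMatrix ℝ *ᵥ x) u = b u := by
    have hsum := (sum_lapMatrix_mulVec_apply (G := G) x).trans hb.symm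
    rw [← Finset.add_sum_erase _ _ (Finset.mem_univ u),
      ← Finset.add_sum_erase _ b (Finset.mem_univ u),
      Finset.sum_congr rfl fun w hw => hne w (Finset.ne_of_mem_erase hw)] at hsum
    exact add_right_cancel hsum
  ext w
  obtain rfl | hw := eq_or_ne w u
  exacts [hu, hne w hw]

theorem isUnitPotential_iff_groundedLap_mulVec {u v : V} (hvu : v ≠ u) {x : V → ℝ}
    (hx : x u = 0) :
    IsUnitPotential G u v x ↔
      groundedLap G u *ᵥ (x ∘ Subtype.val) = Pi.single ⟨v, hvu⟩ 1 := by
  rw [IsUnitPotential, ← groundedLap_mulVec_eq_comp_val_iff hx (by simp)]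
  have : (Pi.single v 1 - Pi.single u 1 : V → ℝ) ∘ Subtype.val =
      (Pi.single ⟨v, hvu⟩ 1 : {w // w ≠ u} → ℝ) := by
    ext w
    simp [Pi.single_apply, w.2, Subtype.ext_iff]
  rw [this]

theorem det_groundedLap_ne_zero (hG : G.Connected) (u : V) : (groundedLap G u).det ≠ 0 := by
  intro hdet
  obtain ⟨y, hy, hLy⟩ := Matrix.exists_mulVec_eq_zero_iff.mpr hdet
  obtain ⟨x, hxu, rfl⟩ := exists_eq_zero_and_comp_val_eq y
  have hLx : G.lapMatrix ℝ *ᵥ x = 0 :=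
    (groundedLap_mulVec_eq_comp_val_iff hxu (by simp)).mp hLy
  rw [SimpleGraph.lapMatrix_mulVec_eq_zero_iff_forall_reachable] at hLx
  exact hy (funext fun w => (hLx w u (hG.preconnected w u)).trans hxu)

theorem exists_isUnitPotential (hG : G.Connected) (u v : V) : ∃ x, IsUnitPotential G u v x := by
  obtain rfl | hvu := eq_or_ne v u
  · exact ⟨0, by simp [IsUnitPotential]⟩
  obtain ⟨x, hxu, hx⟩ :=
    exists_eq_zero_and_comp_val_eq ((groundedLap G u)⁻¹ *ᵥ Pi.single ⟨v, hvu⟩ 1)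
  refine ⟨x, (isUnitPotential_iff_groundedLap_mulVec hvu hxu).mpr ?_⟩
  rw [hx, Matrix.mulVec_mulVec, Matrix.mul_nonsing_inv _ (det_groundedLap_ne_zero hG u).isUnit,
    Matrix.one_mulVec]

theorem IsUnitPotential.sub_const {u v : V} {x : V → ℝ} (hx : IsUnitPotential G u v x) (c : ℝ) :
    IsUnitPotential G u v fun w => x w - c := by
  rw [IsUnitPotential, ← hx]
  ext w
  simp only [lapMatrix_mulVec_apply_eq_sum_sub, sub_sub_sub_cancel_right]

theorem IsUnitPotential.trans {u v w : V} {x y : V → ℝ} (hx : IsUnitPotential G u v x)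
    (hy : IsUnitPotential G v w y) : IsUnitPotential G u w (x + y) := by
  rw [IsUnitPotential, Matrix.mulVec_add, hx, hy, add_comm, sub_add_sub_cancel]

theorem effRes_self {V : Type*} [Finite V] (G : SimpleGraph V) (u : V) : effRes G u u = 0 :=
  if_pos rfl

theorem effRes_eq_det_div_det {u v : V} (huv : u ≠ v) :
    effRes G u v =
      ((G.lapMatrix ℝ).submatrix ((↑) : {w // w ≠ u ∧ w ≠ v} → V) (↑)).det /
        (groundedLap G u).det := by
  simp only [effRes, if_neg huv, groundedLap]
  congr!

theorem IsUnitPotential.effRes_eq (hG : G.Connected) {u v : V} {x : V → ℝ}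
    (hx : IsUnitPotential G u v x) : effRes G u v = x v - x u := by
  obtain rfl | hvu := eq_or_ne v u
  · rw [effRes_self, sub_self]
  have hground := det_mul_apply_of_mulVec_eq_single <|
    (isUnitPotential_iff_groundedLap_mulVec hvu (sub_self (x u))).mp (hx.sub_const (x u))
  let e : {w : {w // w ≠ u} // w ≠ ⟨v, hvu⟩} ≃ {w // w ≠ u ∧ w ≠ v} :=
    (Equiv.subtypeEquivRight fun w => by rw [Ne, Subtype.ext_iff]).trans
      (Equiv.subtypeSubtypeEquivSubtypeInter (· ≠ u) (· ≠ v))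
  rw [effRes_eq_det_div_det hvu.symm, div_eq_iff (det_groundedLap_ne_zero hG u), mul_comm,
    ← Matrix.det_submatrix_equiv_self e]
  exact hground.symm

theorem effRes_comm {V : Type*} [Finite V] {G : SimpleGraph V} (hG : G.Connected) (u v : V) :
    effRes G u v = effRes G v u := by
  classical
  have := Fintype.ofFinite V
  obtain ⟨x, hx⟩ := exists_isUnitPotential hG u v
  have hneg : IsUnitPotential G v u (-x) := by
    rw [IsUnitPotential, Matrix.mulVec_neg, hx, neg_sub]
  rw [hx.effRes_eq hG, hneg.effRes_eq hG, Pi.neg_apply, Pi.neg_apply]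
  ring

end Potential

section Indices

variable {V : Type*} [Fintype V] {G : SimpleGraph V}

theorem sum_cast_degree_eq_two_mul_card_edgeFinset [DecidableRel G.Adj] :
    ∑ u, (G.degree u : ℝ) = 2 * #G.edgeFinset :=
  mod_cast G.sum_degrees_eq_twice_card_edges

theorem degRes_eq_sum [DecidableRel G.Adj] :
    degRes G = 1 / 2 * ∑ u, ∑ v, ((G.degree u : ℝ) + G.degree v) * effRes G u v := by
  unfold degRes
  congr!

theorem Kfv_eq_sum (G : SimpleGraph V) (v : V) : Kfv G v = ∑ u, effRes G u v := by
  unfold Kfv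
  congr!

theorem Dv_eq_sum [DecidableRel G.Adj] (v : V) :
    Dv G v = ∑ u, (G.degree u : ℝ) * effRes G u v := by
  unfold Dv
  congr!

theorem degRes_eq_sum_degree_mul_Kfv [DecidableRel G.Adj] (hG : G.Connected) :
    degRes G = ∑ u, (G.degree u : ℝ) * Kfv G u := by
  have hfst : ∑ u, ∑ v, (G.degree u : ℝ) * effRes G u v = ∑ u, (G.degree u : ℝ) * Kfv G u := by
    simp only [← Finset.mul_sum, effRes_comm hG, Kfv_eq_sum]
  have hsnd : ∑ u, ∑ v, (G.degree v : ℝ) * effRes G u v = ∑ u, (G.degree u : ℝ) * Kfv G u := by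
    rw [Finset.sum_comm]
    simp only [← Finset.mul_sum, Kfv_eq_sum]
  simp only [degRes_eq_sum, add_mul, Finset.sum_add_distrib, hfst, hsnd]
  ring

end Indices

section Iso

variable {V W : Type*} {G : SimpleGraph V} {H : SimpleGraph W}

section Laplacian

variable [Fintype V] [DecidableEq V] [DecidableRel G.Adj] [Fintype W] [DecidableEq W]
  [DecidableRel H.Adj]

theorem lapMatrix_submatrix_iso (φ : G ≃g H) :
    (H.lapMatrix ℝ).submatrix φ φ = G.lapMatrix ℝ := by
  ext u v
  simp [SimpleGraph.lapMatrix, SimpleGraph.degMatrix, Matrix.diagonal_apply,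
    SimpleGraph.adjMatrix_apply, φ.map_adj_iff]

theorem det_lapMatrix_submatrix_val_iso (φ : G ≃g H) {p : V → Prop} {q : W → Prop}
    [DecidablePred p] [DecidablePred q] (h : ∀ w, p w ↔ q (φ w)) :
    ((H.lapMatrix ℝ).submatrix ((↑) : Subtype q → W) (↑)).det =
      ((G.lapMatrix ℝ).submatrix ((↑) : Subtype p → V) (↑)).det := by
  rw [← Matrix.det_submatrix_equiv_self (φ.toEquiv.subtypeEquiv h), ← lapMatrix_submatrix_iso φ]
  rfl

end Laplacian

variable [Finite V] [Finite W]

theorem effRes_iso (φ : G ≃g H) (u v : V) : effRes H (φ u) (φ v) = effRes G u v := by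
  classical
  have := Fintype.ofFinite V
  have := Fintype.ofFinite W
  obtain rfl | huv := eq_or_ne u v
  · rw [effRes_self, effRes_self]
  rw [effRes_eq_det_div_det huv, effRes_eq_det_div_det (φ.injective.ne huv), groundedLap,
    groundedLap, det_lapMatrix_submatrix_val_iso φ (p := (· ≠ u)) (q := (· ≠ φ u)) (by simp),
    det_lapMatrix_submatrix_val_iso φ (p := fun w => w ≠ u ∧ w ≠ v)
      (q := fun w => w ≠ φ u ∧ w ≠ φ v) (by simp)]

theorem degRes_iso (φ : G ≃g H) : degRes G = degRes H := by
  classical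
  have := Fintype.ofFinite V
  have := Fintype.ofFinite W
  rw [degRes_eq_sum, degRes_eq_sum, ← φ.toEquiv.sum_comp]
  simp only [← φ.toEquiv.sum_comp (fun v => _ * effRes H _ v)]
  simp [effRes_iso]

end Iso

section AddPendant

/-- The graph obtained from `H` by attaching a new vertex `none` of degree one to `v`. -/
def addPendant {V : Type*} (H : SimpleGraph V) (v : V) : SimpleGraph (Option V) :=
  H.map some ⊔ SimpleGraph.edge none (some v)

variable {V : Type*} {H : SimpleGraph V} {v : V}

@[simp]
theorem addPendant_adj_some_some {x y : V} :
    (addPendant H v).Adj (some x) (some y) ↔ H.Adj x y := by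
  simpa [addPendant, SimpleGraph.map_adj', SimpleGraph.edge_adj] using SimpleGraph.Adj.ne

@[simp]
theorem addPendant_adj_none_some {x : V} : (addPendant H v).Adj none (some x) ↔ x = v := by
  simp [addPendant, SimpleGraph.map_adj', SimpleGraph.edge_adj, eq_comm]

@[simp]
theorem addPendant_adj_some_none {x : V} : (addPendant H v).Adj (some x) none ↔ x = v := by
  rw [SimpleGraph.adj_comm, addPendant_adj_none_some]

theorem connected_addPendant (hH : H.Connected) : (addPendant H v).Connected := by
  have hsome : ∀ x, (addPendant H v).Reachable (some x) (some v) := fun x =>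
    (hH.preconnected x v).map ⟨some, addPendant_adj_some_some.mpr⟩
  have hv : ∀ x, (addPendant H v).Reachable x (some v)
    | none => SimpleGraph.Adj.reachable (addPendant_adj_none_some.mpr rfl)
    | some x => hsome x
  exact ⟨fun x y => (hv x).trans (hv y).symm⟩

section Potential

variable [Fintype V] [DecidableEq V] [DecidableRel (addPendant H v).Adj]

theorem lapMatrix_addPendant_mulVec_none (z : Option V → ℝ) :
    ((addPendant H v).lapMatrix ℝ *ᵥ z) none = z none - z (some v) := by
  simp [lapMatrix_mulVec_apply_eq_sum_sub, Fintype.sum_option]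

theorem lapMatrix_addPendant_mulVec_some [DecidableRel H.Adj] (z : Option V → ℝ) (x : V) :
    ((addPendant H v).lapMatrix ℝ *ᵥ z) (some x) =
      (H.lapMatrix ℝ *ᵥ (z ∘ some)) x + if x = v then z (some v) - z none else 0 := by
  simp only [lapMatrix_mulVec_apply_eq_sum_sub, Fintype.sum_option, addPendant_adj_some_none,
    addPendant_adj_some_some, Function.comp_apply]
  rw [add_comm]
  congr 1
  obtain rfl | hx := eq_or_ne x v
  · rfl
  · rw [if_neg hx, if_neg hx]

end Potential

theorem degree_addPendant_none [Fintype V] [DecidableRel (addPendant H v).Adj] :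
    (addPendant H v).degree none = 1 := by
  classical
  rw [← SimpleGraph.card_neighborFinset_eq_degree, SimpleGraph.neighborFinset_eq_filter,
    Finset.card_filter, Fintype.sum_option]
  simp

theorem degree_addPendant_some [Fintype V] [DecidableEq V] [DecidableRel H.Adj]
    [DecidableRel (addPendant H v).Adj] (x : V) :
    (addPendant H v).degree (some x) = H.degree x + if x = v then 1 else 0 := by
  simp only [← SimpleGraph.card_neighborFinset_eq_degree, SimpleGraph.neighborFinset_eq_filter,
    Finset.card_filter, Fintype.sum_option, addPendant_adj_some_some, addPendant_adj_some_none]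
  rw [add_comm]

variable [Finite V]

theorem effRes_addPendant_some_some (hH : H.Connected) (x y : V) :
    effRes (addPendant H v) (some x) (some y) = effRes H x y := by
  classical
  have := Fintype.ofFinite V
  obtain ⟨z, hz⟩ := exists_isUnitPotential hH x y
  have hz' : IsUnitPotential (addPendant H v) (some x) (some y) fun w => w.elim (z v) z := by
    funext w
    cases w with
    | none => simp [lapMatrix_addPendant_mulVec_none]
    | some w =>
      rw [lapMatrix_addPendant_mulVec_some]
      refine (add_eq_left.mpr (by simp)).trans ((congrFun hz w).trans ?_)
      simp [Pi.single_apply]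
  rw [hz.effRes_eq hH, hz'.effRes_eq (connected_addPendant hH)]
  rfl

theorem effRes_addPendant_none_some (hH : H.Connected) (x : V) :
    effRes (addPendant H v) none (some x) = effRes H v x + 1 := by
  classical
  have := Fintype.ofFinite V
  obtain ⟨z, hz⟩ := exists_isUnitPotential hH v x
  have hz' : IsUnitPotential (addPendant H v) none (some x) fun w => w.elim (z v - 1) z := by
    funext w
    cases w with
    | none => simp [lapMatrix_addPendant_mulVec_none]
    | some w =>
      rw [lapMatrix_addPendant_mulVec_some]
      refine (congrArg (· + _) (congrFun hz w)).trans ?_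
      simp [Pi.single_apply]
  rw [hz.effRes_eq hH, hz'.effRes_eq (connected_addPendant hH)]
  simp only [Option.elim]
  ring

theorem Kfv_addPendant_none [Fintype V] (hH : H.Connected) :
    Kfv (addPendant H v) none = Kfv H v + Fintype.card V := by
  rw [Kfv_eq_sum, Kfv_eq_sum, Fintype.sum_option, effRes_self, zero_add]
  simp only [effRes_comm (connected_addPendant hH) _ none, effRes_addPendant_none_some hH,
    effRes_comm hH v, Finset.sum_add_distrib, Finset.sum_const, Finset.card_univ,
    nsmul_eq_mul, mul_one]

theorem Kfv_addPendant_some (hH : H.Connected) (x : V) :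
    Kfv (addPendant H v) (some x) = Kfv H x + effRes H x v + 1 := by
  have := Fintype.ofFinite V
  rw [Kfv_eq_sum, Kfv_eq_sum, Fintype.sum_option, effRes_addPendant_none_some hH,
    effRes_comm hH v]
  simp only [effRes_addPendant_some_some hH]
  ring

theorem degRes_addPendant [Fintype V] [DecidableRel H.Adj] (hH : H.Connected) (v : V) :
    degRes (addPendant H v) =
      degRes H + 2 * Kfv H v + Dv H v + Fintype.card V + 2 * #H.edgeFinset + 1 := by
  classical
  have hsum : ∑ x, (H.degree x : ℝ) * Kfv (addPendant H v) (some x) =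
      degRes H + Dv H v + 2 * #H.edgeFinset := by
    simp only [Kfv_addPendant_some hH, mul_add, mul_one, Finset.sum_add_distrib,
      sum_cast_degree_eq_two_mul_card_edgeFinset, degRes_eq_sum_degree_mul_Kfv hH, Dv_eq_sum]
  calc degRes (addPendant H v)
      = Kfv (addPendant H v) none + (∑ x, (H.degree x : ℝ) * Kfv (addPendant H v) (some x) +
          Kfv (addPendant H v) (some v)) := by
        rw [degRes_eq_sum_degree_mul_Kfv (connected_addPendant hH), Fintype.sum_option]
        simp [degree_addPendant_none, degree_addPendant_some, add_mul, Finset.sum_add_distrib]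
    _ = _ := by
        rw [hsum, Kfv_addPendant_none hH, Kfv_addPendant_some hH, effRes_self]
        ring

end AddPendant

section PendantTriangle

/-- `a`, `b`, `c` span a triangle of `G` that is attached to the rest of `G` only at its apex `c`.
The two neighborhoods force `a`, `b`, `c` to be distinct, as `G` has no loops. -/
structure IsPendantTriangle {V : Type*} (G : SimpleGraph V) (c a b : V) : Prop where
  neighborSet_left : G.neighborSet a = {b, c}
  neighborSet_right : G.neighborSet b = {a, c}

variable {V : Type*} {G : SimpleGraph V} {a b c : V}

namespace IsPendantTriangle

theorem adj_left_iff (h : IsPendantTriangle G c a b) {x : V} : G.Adj a x ↔ x = b ∨ x = c :=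
  Set.ext_iff.mp h.neighborSet_left x

theorem adj_right_iff (h : IsPendantTriangle G c a b) {x : V} : G.Adj b x ↔ x = a ∨ x = c :=
  Set.ext_iff.mp h.neighborSet_right x

theorem left_ne_right (h : IsPendantTriangle G c a b) : a ≠ b :=
  (h.adj_left_iff.mpr (.inl rfl)).ne

theorem left_ne_apex (h : IsPendantTriangle G c a b) : a ≠ c :=
  (h.adj_left_iff.mpr (.inr rfl)).ne

theorem right_ne_apex (h : IsPendantTriangle G c a b) : b ≠ c :=
  (h.adj_right_iff.mpr (.inr rfl)).ne

theorem symm (h : IsPendantTriangle G c a b) : IsPendantTriangle G c b a :=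
  ⟨h.neighborSet_right, h.neighborSet_left⟩

theorem degree_left [Fintype V] [DecidableRel G.Adj] (h : IsPendantTriangle G c a b) :
    G.degree a = 2 := by
  classical
  have hN : G.neighborFinset a = {b, c} := by ext; simp [h.adj_left_iff]
  rw [← SimpleGraph.card_neighborFinset_eq_degree, hN, Finset.card_pair h.right_ne_apex]

section Potential

variable [Fintype V] [DecidableEq V] [DecidableRel G.Adj]

theorem lapMatrix_mulVec_left (h : IsPendantTriangle G c a b) (z : V → ℝ) :
    (G.lapMatrix ℝ *ᵥ z) a = 2 * z a - z b - z c := by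
  have hN : G.neighborFinset a = {b, c} := by ext; simp [h.adj_left_iff]
  rw [SimpleGraph.lapMatrix_mulVec_apply, h.degree_left, hN, Finset.sum_pair h.right_ne_apex]
  push_cast
  ring

theorem lapMatrix_mulVec_single_left (h : IsPendantTriangle G c a b) :
    G.lapMatrix ℝ *ᵥ Pi.single a 1 =
      (2 : ℝ) • Pi.single a 1 - Pi.single b 1 - Pi.single c 1 := by
  ext x
  rw [Matrix.mulVec_single_one, Matrix.col_apply, ← (SimpleGraph.isSymm_lapMatrix ℝ G).apply,
    ← Matrix.col_apply (G.lapMatrix ℝ), ← Matrix.mulVec_single_one, h.lapMatrix_mulVec_left]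
  simp [Pi.single_apply, eq_comm]

theorem isUnitPotential_left (h : IsPendantTriangle G c a b) :
    IsUnitPotential G c a ((2 / 3 : ℝ) • Pi.single a 1 + (1 / 3 : ℝ) • Pi.single b 1) := by
  rw [IsUnitPotential, Matrix.mulVec_add, Matrix.mulVec_smul, Matrix.mulVec_smul,
    h.lapMatrix_mulVec_single_left, h.symm.lapMatrix_mulVec_single_left]
  module

theorem sub_apex_of_isUnitPotential (h : IsPendantTriangle G c a b) {x : V} {z : V → ℝ}
    (hz : IsUnitPotential G x c z) :
    z a - z c = -(2 / 3) * (if x = a then 1 else 0) - 1 / 3 * if x = b then 1 else 0 := by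
  have ha : 2 * z a - z b - z c = -if x = a then 1 else 0 := by
    rw [← h.lapMatrix_mulVec_left, hz]
    simp [Pi.single_apply, h.left_ne_apex, eq_comm]
  have hb : 2 * z b - z a - z c = -if x = b then 1 else 0 := by
    rw [← h.symm.lapMatrix_mulVec_left, hz]
    simp [Pi.single_apply, h.right_ne_apex, eq_comm]
  linarith

end Potential

theorem effRes_left [Finite V] [DecidableEq V] (h : IsPendantTriangle G c a b)
    (hG : G.Connected) (x : V) :
    effRes G x a = effRes G x c +
      2 / 3 * (1 - 2 * (if x = a then 1 else 0) - if x = b then 1 else 0) := by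
  classical
  have := Fintype.ofFinite V
  obtain ⟨z, hz⟩ := exists_isUnitPotential hG x c
  have hac := h.sub_apex_of_isUnitPotential hz
  rw [(hz.trans h.isUnitPotential_left).effRes_eq hG, hz.effRes_eq hG]
  simp only [Pi.add_apply, Pi.smul_apply, Pi.single_apply, smul_eq_mul, h.left_ne_right,
    if_true, if_false]
  linarith

theorem Kfv_left [Fintype V] (h : IsPendantTriangle G c a b) (hG : G.Connected) :
    Kfv G a = Kfv G c + 2 / 3 * (Fintype.card V - 3) := by
  classical
  simp only [Kfv_eq_sum, h.effRes_left hG, Finset.sum_add_distrib, ← Finset.mul_sum,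
    Finset.sum_sub_distrib, Finset.sum_ite_eq', Finset.mem_univ, if_true, Finset.sum_const,
    Finset.card_univ, nsmul_eq_mul]
  ring

variable [Fintype V] [DecidableRel G.Adj]

theorem Dv_left (h : IsPendantTriangle G c a b) (hG : G.Connected) :
    Dv G a = Dv G c + 4 / 3 * (#G.edgeFinset - 3) := by
  classical
  have hab : ∑ x, (G.degree x : ℝ) *
      (2 * (if x = a then 1 else 0) + if x = b then 1 else 0) = 6 := by
    simp only [mul_add, Finset.sum_add_distrib, mul_ite, mul_one, mul_zero, Finset.sum_ite_eq',
      Finset.mem_univ, if_true, h.degree_left, h.symm.degree_left]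
    norm_num
  calc Dv G a = ∑ x, ((G.degree x : ℝ) * effRes G x c + 2 / 3 * G.degree x -
        2 / 3 * (G.degree x * (2 * (if x = a then 1 else 0) + if x = b then 1 else 0))) := by
        rw [Dv_eq_sum]
        exact Finset.sum_congr rfl fun x _ => by rw [h.effRes_left hG]; ring
    _ = Dv G c + 4 / 3 * (#G.edgeFinset - 3) := by
        rw [Finset.sum_sub_distrib, Finset.sum_add_distrib, ← Dv_eq_sum, ← Finset.mul_sum,
          ← Finset.mul_sum, sum_cast_degree_eq_two_mul_card_edgeFinset, hab]
        ring

theorem degRes_addPendant_left_sub_apex (h : IsPendantTriangle G c a b) (hG : G.Connected) :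
    degRes (addPendant G a) - degRes (addPendant G c) =
      4 / 3 * (Fintype.card V + #G.edgeFinset) - 8 := by
  rw [degRes_addPendant hG, degRes_addPendant hG, h.Kfv_left hG, h.Dv_left hG]
  ring

end IsPendantTriangle

end PendantTriangle

theorem nonempty_addPendant_iso {m : ℕ} {H : SimpleGraph (Fin m)} {G : SimpleGraph (Fin (m + 1))}
    {v : Fin m} (p : Fin (m + 1)) (h_new : ∀ x, G.Adj p (p.succAbove x) ↔ x = v)
    (h_old : ∀ x y, G.Adj (p.succAbove x) (p.succAbove y) ↔ H.Adj x y) :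
    Nonempty (addPendant H v ≃g G) :=
  ⟨{ toEquiv := (finSuccEquiv' p).symm
     map_rel_iff' := by
      rintro (_ | x) (_ | y) <;>
        simp [finSuccEquiv'_symm_none, finSuccEquiv'_symm_some, h_new, h_old, G.adj_comm _ p] }⟩

theorem val_succAbove {m : ℕ} (p : Fin (m + 1)) (x : Fin m) :
    (p.succAbove x).val = if x.val < p.val then x.val else x.val + 1 := by
  simp only [Fin.succAbove, Fin.lt_def, apply_ite Fin.val, Fin.val_castSucc, Fin.val_succ]

section TriangleBouquet

variable {m t : ℕ}

theorem G0_adj_iff {a b : Fin m} :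
    (G0 m t).Adj a b ↔ a.val ≠ b.val ∧
      (a.val = 0 ∨ b.val = 0 ∨
        Odd a.val ∧ b.val = a.val + 1 ∧ b.val ≤ 2 * t ∨
        Odd b.val ∧ a.val = b.val + 1 ∧ a.val ≤ 2 * t) := by
  simp only [G0, SimpleGraph.fromRel_adj, Fin.val_ne_iff]
  tauto

theorem G4g_adj_iff {a b : Fin m} :
    (G4g m t).Adj a b ↔ a.val ≠ b.val ∧
      (a.val = 0 ∧ b.val ≠ 2 * t + 1 ∨ b.val = 0 ∧ a.val ≠ 2 * t + 1 ∨
        Odd a.val ∧ b.val = a.val + 1 ∧ b.val ≤ 2 * t ∨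
        Odd b.val ∧ a.val = b.val + 1 ∧ a.val ≤ 2 * t ∨
        a.val = 1 ∧ b.val = 2 * t + 1 ∨ b.val = 1 ∧ a.val = 2 * t + 1) := by
  simp only [G4g, SimpleGraph.fromRel_adj, Fin.val_ne_iff]
  tauto

theorem nonempty_addPendant_G0_iso_G0 [NeZero m] (hm : 2 * t + 1 ≤ m) :
    Nonempty (addPendant (G0 m t) 0 ≃g G0 (m + 1) t) := by
  refine nonempty_addPendant_iso ⟨2 * t + 1, by omega⟩ (fun x => ?_) fun x y => ?_
  · simp only [G0_adj_iff, val_succAbove, Fin.ext_iff, Fin.val_zero]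
    grind
  · simp only [G0_adj_iff, val_succAbove]
    grind

theorem nonempty_addPendant_G0_iso_G4g (ht : 1 ≤ t) (hm : 2 * t + 1 ≤ m) {a : Fin m}
    (ha : a.val = 1) : Nonempty (addPendant (G0 m t) a ≃g G4g (m + 1) t) := by
  refine nonempty_addPendant_iso ⟨2 * t + 1, by omega⟩ (fun x => ?_) fun x y => ?_
  · simp only [G4g_adj_iff, val_succAbove, Fin.ext_iff]
    grind
  · simp only [G0_adj_iff, G4g_adj_iff, val_succAbove]
    grind

variable [NeZero m]

theorem connected_G0 : (G0 m t).Connected := by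
  have h (x : Fin m) : (G0 m t).Reachable 0 x := by
    obtain rfl | hx := eq_or_ne x 0
    · exact .rfl
    · exact (G0_adj_iff.mpr ⟨Fin.val_ne_iff.mpr hx.symm, .inl rfl⟩).reachable
  exact ⟨fun x y => (h x).symm.trans (h y)⟩

theorem isPendantTriangle_G0 {a b : Fin m} (ha : Odd a.val) (hb : b.val = a.val + 1)
    (hbt : b.val ≤ 2 * t) : IsPendantTriangle (G0 m t) 0 a b := by
  constructor <;> ext x <;>
  · simp only [SimpleGraph.mem_neighborSet, G0_adj_iff, Fin.ext_iff, Set.mem_insert_iff,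
      Set.mem_singleton_iff, Fin.val_zero]
    grind

variable [DecidableRel (G0 m t).Adj]

theorem degree_G0_zero : (G0 m t).degree 0 = m - 1 := by
  have hN : (G0 m t).neighborFinset 0 = Finset.univ.erase 0 := by
    ext x
    simp only [SimpleGraph.mem_neighborFinset, G0_adj_iff, Finset.mem_erase, Finset.mem_univ,
      Fin.val_zero]
    grind
  rw [← SimpleGraph.card_neighborFinset_eq_degree, hN,
    Finset.card_erase_of_mem (Finset.mem_univ 0), Finset.card_fin]

theorem degree_G0_of_le (hm : 2 * t < m) {x : Fin m} (hx : x ≠ 0) (hxt : x.val ≤ 2 * t) :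
    (G0 m t).degree x = 2 := by
  obtain hodd | heven := x.val.even_or_odd.symm
  · exact (isPendantTriangle_G0 (b := ⟨x.val + 1, by grind⟩) hodd rfl (by grind)).degree_left
  · have := Fin.val_ne_iff.mpr hx
    exact (isPendantTriangle_G0 (a := ⟨x.val - 1, by omega⟩) (b := x) (by grind) (by grind)
      hxt).symm.degree_left

theorem degree_G0_of_lt {x : Fin m} (hxt : 2 * t < x.val) : (G0 m t).degree x = 1 := by
  have hN : (G0 m t).neighborFinset x = {0} := by
    ext y
    simp only [SimpleGraph.mem_neighborFinset, G0_adj_iff, Finset.mem_singleton, Fin.ext_iff,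
      Fin.val_zero]
    grind
  rw [← SimpleGraph.card_neighborFinset_eq_degree, hN, Finset.card_singleton]

theorem card_edgeFinset_G0 (hm : 2 * t < m) : #(G0 m t).edgeFinset + 1 = m + t := by
  obtain ⟨k, rfl⟩ : ∃ k, m = k + 1 := ⟨m - 1, by omega⟩
  have hdeg (x : Fin k) : (G0 (k + 1) t).degree x.succ = 1 + if x.val < 2 * t then 1 else 0 := by
    split_ifs with hx
    · exact degree_G0_of_le hm x.succ_ne_zero (by simpa using hx)
    · exact degree_G0_of_lt (by simpa using hx)
  have hsum : ∑ x, (G0 (k + 1) t).degree x = 2 * (k + t) := by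
    rw [Fin.sum_univ_succ, degree_G0_zero]
    simp only [hdeg, Finset.sum_add_distrib, ← Finset.card_filter, Fin.card_filter_val_lt]
    simp only [add_tsub_cancel_right, Finset.sum_const, Finset.card_univ, Fintype.card_fin,
      smul_eq_mul, mul_one]
    omega
  rw [SimpleGraph.sum_degrees_eq_twice_card_edges] at hsum
  omega

end TriangleBouquet

/-- `D_R(G4) - D_R(G⁰(n,t)) = (8/3)n + (4/3)t - 12`. -/
theorem stmt_9 (n t : ℕ) (h1 : 2 * t + 2 ≤ n) (ht : 1 ≤ t) :
    degRes (G4g n t) - degRes (G0 n t) = (8 / 3) * (n : ℝ) + (4 / 3) * t - 12 := by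
  classical
  obtain ⟨m, rfl⟩ : ∃ m, n = m + 1 := ⟨n - 1, by omega⟩
  have : NeZero m := ⟨by omega⟩
  let a : Fin m := ⟨1, by omega⟩
  let b : Fin m := ⟨2, by omega⟩
  have htriangle : IsPendantTriangle (G0 m t) 0 a b :=
    isPendantTriangle_G0 odd_one rfl (show 2 ≤ 2 * t by omega)
  obtain ⟨φ⟩ := nonempty_addPendant_G0_iso_G0 (t := t) (m := m) (by omega)
  obtain ⟨ψ⟩ := nonempty_addPendant_G0_iso_G4g ht (by omega) (a := a) rfl
  have hcard : (#(G0 m t).edgeFinset : ℝ) + 1 = m + t :=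
    mod_cast card_edgeFinset_G0 (by omega)
  rw [← degRes_iso φ, ← degRes_iso ψ, htriangle.degRes_addPendant_left_sub_apex connected_G0,
    Fintype.card_fin]
  push_cast
  linarith
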